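/- arXiv:2504.15550 — 2 statements merged into one kernel-verified Lean document; each statement's English description precedes it below -/
import Mathlib

section
/- For every big tree B, there exists a predictor P such that for all leakage traces k, k is a path in B if and only if P predicts k. -/
/-!
A trace `k` steers a walk through the tree `B`: each event of `k` moves to the child it selects.
The predictor answers, on `k`, the shape of the node where that walk ends. Both `BigPathIn` and
`Predicts` can be unfolded one event at a time from the front of the trace: for `Predicts` this is
`predicts_cons`, where the predictor seen after the event `e` is `fun k => P (e :: k)`, and for
the predictor of `B` that shifted predictor is the predictor of the child selected by `e`. The
equivalence then follows by induction on the trace, for all trees simultaneously. An event that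
does not match the current node may move anywhere, since the mismatch already violates the
prediction at that node.
-/

universe u

inductive LeakageEvent (α : Type u) : Type u where
  | Leak : α → LeakageEvent α
  | CompNonDet : α → LeakageEvent α

abbrev Trace (α : Type u) := List (LeakageEvent α)

inductive Qevent (α : Type u) : Type u where
  | qCompNonDet : Qevent α
  | qLeak : α → Qevent α
  | qEnd : Qevent α

abbrev Predictor (α : Type u) := Trace α → Qevent α

def Predicts {α : Type u} (P : Predictor α) (k : Trace α) : Prop :=
  (∀ k₁ x k₂, k = k₁ ++ [LeakageEvent.Leak x] ++ k₂ → P k₁ = Qevent.qLeak x) ∧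
  (∀ k₁ x k₂, k = k₁ ++ [LeakageEvent.CompNonDet x] ++ k₂ → P k₁ = Qevent.qCompNonDet) ∧
  P k = Qevent.qEnd

/-- Node shapes of a big tree: a leaf, a leak-`x` node, or a branch node. -/
inductive BigShape (α : Type u) : Type u where
  | leaf : BigShape α
  | leak : α → BigShape α
  | branch : BigShape α

/-- Children of each node shape: none for a leaf, one for a leak node,
`α`-indexed for a branch node. -/
def BigChild (α : Type u) : BigShape α → Type u
  | .leaf => PEmpty
  | .leak _ => PUnit
  | .branch => α

def BigTreeF (α : Type u) : PFunctor.{u} := ⟨BigShape α, BigChild α⟩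

/-- Big trees: the coinductive type (M-type) of the polynomial functor above. -/
abbrev BigTree (α : Type u) := (BigTreeF α).M

inductive BigPathIn {α : Type u} : Trace α → BigTree α → Prop where
  | nil {B : BigTree α} (h : (PFunctor.M.dest B).1 = BigShape.leaf) :
      BigPathIn [] B
  | leak {B : BigTree α} {k : Trace α} {x : α}
      (f : BigChild α (BigShape.leak x) → BigTree α)
      (h : PFunctor.M.dest B = ⟨BigShape.leak x, f⟩)
      (hp : BigPathIn k (f PUnit.unit)) :
      BigPathIn (LeakageEvent.Leak x :: k) B
  | branch {B : BigTree α} {k : Trace α} {x : α}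
      (f : BigChild α BigShape.branch → BigTree α)
      (h : PFunctor.M.dest B = ⟨BigShape.branch, f⟩)
      (hp : BigPathIn k (f x)) :
      BigPathIn (LeakageEvent.CompNonDet x :: k) B

/-- The prediction made at the root of a tree with the given root shape. -/
def shapeQuery {α : Type u} : BigShape α → Qevent α
  | .leaf => .qEnd
  | .leak x => .qLeak x
  | .branch => .qCompNonDet

/-- The subtree reached from a node, given by its unfolding, along an event; `B` is the default
value returned when the kind of event does not fit the node. -/
def stepNode {α : Type u} (B : BigTree α) :
    (BigTreeF α).Obj (BigTree α) → LeakageEvent α → BigTree α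
  | ⟨.leak _, f⟩, .Leak _ => f PUnit.unit
  | ⟨.branch, f⟩, .CompNonDet x => f x
  | _, _ => B

/-- The predictor of a tree: follow the trace from the root and report the shape of the node
reached. -/
def treePredictor {α : Type u} : BigTree α → Predictor α
  | B, [] => shapeQuery (PFunctor.M.dest B).1
  | B, e :: k => treePredictor (stepNode B (PFunctor.M.dest B) e) k

/-- The prediction that announces a given event. -/
def eventQuery {α : Type u} : LeakageEvent α → Qevent α
  | .Leak x => .qLeak x
  | .CompNonDet _ => .qCompNonDet

theorem predicts_nil {α : Type u} (P : Predictor α) :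
    Predicts P [] ↔ P [] = Qevent.qEnd := by
  simp [Predicts]

theorem predicts_cons {α : Type u} (P : Predictor α) (e : LeakageEvent α) (k : Trace α) :
    Predicts P (e :: k) ↔ P [] = eventQuery e ∧ Predicts (fun k' => P (e :: k')) k := by
  constructor
  · rintro ⟨hL, hC, hE⟩
    refine ⟨?_, fun k₁ x k₂ h => hL (e :: k₁) x k₂ (by simp [h]),
      fun k₁ x k₂ h => hC (e :: k₁) x k₂ (by simp [h]), hE⟩
    cases e with
    | Leak x => exact hL [] x k rfl
    | CompNonDet x => exact hC [] x k rfl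
  · rintro ⟨h0, hL, hC, hE⟩
    refine ⟨?_, ?_, hE⟩
    · rintro (_ | ⟨a, k₁⟩) x k₂ h
      · obtain ⟨rfl, rfl⟩ : e = .Leak x ∧ k = k₂ := by simpa using h
        exact h0
      · obtain ⟨rfl, hk⟩ : e = a ∧ k = k₁ ++ [.Leak x] ++ k₂ := by simpa using h
        exact hL k₁ x k₂ hk
    · rintro (_ | ⟨a, k₁⟩) x k₂ h
      · obtain ⟨rfl, rfl⟩ : e = .CompNonDet x ∧ k = k₂ := by simpa using h
        exact h0
      · obtain ⟨rfl, hk⟩ : e = a ∧ k = k₁ ++ [.CompNonDet x] ++ k₂ := by simpa using h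
        exact hC k₁ x k₂ hk

theorem bigPathIn_nil {α : Type u} (B : BigTree α) :
    BigPathIn [] B ↔ shapeQuery (PFunctor.M.dest B).1 = Qevent.qEnd := by
  constructor
  · rintro ⟨h⟩
    rw [h]
    rfl
  · intro h
    refine .nil ?_
    generalize (PFunctor.M.dest B).1 = s at h
    cases s with
    | leaf => rfl
    | leak y => cases h
    | branch => cases h

theorem bigPathIn_cons {α : Type u} (B : BigTree α) (e : LeakageEvent α) (k : Trace α) :
    BigPathIn (e :: k) B ↔ shapeQuery (PFunctor.M.dest B).1 = eventQuery e ∧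
      BigPathIn k (stepNode B (PFunctor.M.dest B) e) := by
  constructor
  · intro h
    cases h with
    | leak f h hp =>
      rw [h]
      exact ⟨rfl, hp⟩
    | branch f h hp =>
      rw [h]
      exact ⟨rfl, hp⟩
  · rintro ⟨h, hp⟩
    rcases hB : PFunctor.M.dest B with ⟨s, f⟩
    rw [hB] at h hp
    cases s with
    | leaf => cases e <;> cases h
    | leak y =>
      cases e with
      | Leak x =>
        cases h
        exact .leak f hB hp
      | CompNonDet x => cases h
    | branch =>
      cases e with
      | Leak x => cases h
      | CompNonDet x => exact .branch f hB hp

theorem bigPathIn_iff_predicts {α : Type u} (k : Trace α) (B : BigTree α) :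
    BigPathIn k B ↔ Predicts (treePredictor B) k := by
  induction k generalizing B with
  | nil => rw [bigPathIn_nil, predicts_nil]; rfl
  | cons e k ih => rw [bigPathIn_cons, predicts_cons, ih]; rfl

theorem bigTree_to_predictor {α : Type u} (B : BigTree α) :
    ∃ P : Predictor α, ∀ k : Trace α, BigPathIn k B ↔ Predicts P k :=
  ⟨treePredictor B, fun k => bigPathIn_iff_predicts k B⟩
end

section
/- If k and k' are both paths in the same big tree B, and both k and k' are compatible with the same oracle A, then k = k'. -/
/-! The two paths are compared by induction on the first, with the oracle generalized. The root
of the tree fixes the kind of the first event, and its value at a leak node; at a branch node the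
value is the oracle's answer on the empty trace (`Compatible.head`). So the first events agree,
both tails are paths in the same subtree, and both are compatible with the oracle shifted by that
event (`Compatible.tail`). -/

universe u

abbrev Oracle (α : Type u) := Trace α → α

def Compatible {α : Type u} (k : Trace α) (A : Oracle α) : Prop :=
  ∀ k₁ k₂ x, k = k₁ ++ [LeakageEvent.CompNonDet x] ++ k₂ → A k₁ = x

/-- Removing the first event shifts the oracle: it is then queried with that event prepended. -/
theorem Compatible.tail {α : Type u} {e : LeakageEvent α} {k : Trace α} {A : Oracle α}
    (h : Compatible (e :: k) A) : Compatible k (fun t => A (e :: t)) := by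
  intro k₁ k₂ x hx
  exact h (e :: k₁) k₂ x (by simp [hx])

theorem Compatible.head {α : Type u} {x : α} {k : Trace α} {A : Oracle α}
    (h : Compatible (LeakageEvent.CompNonDet x :: k) A) : A [] = x :=
  h [] k x rfl

theorem bigPath_unique_of_compatible {α : Type u} (B : BigTree α)
    (k k' : Trace α) (A : Oracle α)
    (hk : BigPathIn k B) (hk' : BigPathIn k' B)
    (hkA : Compatible k A) (hk'A : Compatible k' A) :
    k = k' := by
  induction hk generalizing k' A with
  | nil h =>
    cases hk' with
    | nil _ => rfl
    | leak f h' _ => rw [h'] at h; cases h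
    | branch f h' _ => rw [h'] at h; cases h
  | leak f h _ ih =>
    cases hk' with
    | nil h' => rw [h] at h'; cases h'
    | leak g h' hp' =>
      rw [h] at h'
      cases h'
      rw [ih _ _ hp' hkA.tail hk'A.tail]
    | branch g h' _ => rw [h] at h'; cases h'
  | branch f h _ ih =>
    -- If both paths branch, both choices equal the answer of the oracle on the empty trace.
    cases hk' with
    | nil h' => rw [h] at h'; cases h'
    | leak g h' _ => rw [h] at h'; cases h'
    | branch g h' hp' =>
      rw [h] at h'
      cases h'
      obtain rfl := hkA.head
      obtain rfl := hk'A.head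
      rw [ih _ _ hp' hkA.tail hk'A.tail]
end
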